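/- Let n \ge 2 and a \ge 1 be integers. There exists an integer N (depending on n and a) such that for every odd integer q > N the following holds. If a is odd, writing g(y) := y \cdot (1 + y^2 + y^4 + ... + y^{2a})^n \cdot (1 + y^2 + y^4 + ... + y^{a-1}) = \sum_k g_k y^k, then (a+1)^{n+1} \cdot N_{BC}(n,q,1,a) = 2 \sum_k g_k (q-k)^n. If a is even, writing g(y) := (1 + y^2 + y^4 + ... + y^{2a})^n \cdot (1 + y + y^2 + ... + y^a) = \sum_k g_k y^k, then (a+1)^{n+1} \cdot N_{BC}(n,q,1,a) = \sum_k g_k (q-k)^n. -/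

import Mathlib

open Polynomial

/-- `x` avoids the integer interval `[u, v]` in `ZMod q`. -/
def Avoids {q : ℕ} (x : ZMod q) (u v : ℤ) : Prop :=
  ∀ k : ℤ, u ≤ k → k ≤ v → x ≠ (k : ZMod q)

/-- Count for the type `B` deformation: `x_i`, `x_i - x_j` and `x_i + x_j`
all avoid `[u, v]`. -/
noncomputable def N_B (n q : ℕ) (u v : ℤ) : ℕ :=
  Set.ncard {x : Fin n → ZMod q |
    (∀ i, Avoids (x i) u v) ∧
    ∀ i j : Fin n, i < j → Avoids (x i - x j) u v ∧ Avoids (x i + x j) u v}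

/-- Count for the type `C` deformation: `2x_i`, `x_i - x_j` and `x_i + x_j`
all avoid `[u, v]`. -/
noncomputable def N_C (n q : ℕ) (u v : ℤ) : ℕ :=
  Set.ncard {x : Fin n → ZMod q |
    (∀ i, Avoids (2 * x i) u v) ∧
    ∀ i j : Fin n, i < j → Avoids (x i - x j) u v ∧ Avoids (x i + x j) u v}

/-- Count for the type `BC` deformation: `x_i`, `2x_i`, `x_i - x_j` and `x_i + x_j`
all avoid `[u, v]`. -/
noncomputable def N_BC (n q : ℕ) (u v : ℤ) : ℕ :=
  Set.ncard {x : Fin n → ZMod q |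
    (∀ i, Avoids (x i) u v ∧ Avoids (2 * x i) u v) ∧
    ∀ i j : Fin n, i < j → Avoids (x i - x j) u v ∧ Avoids (x i + x j) u v}

/-- Count for the type `D` deformation: `x_i - x_j` and `x_i + x_j`
avoid `[u, v]`. -/
noncomputable def N_D (n q : ℕ) (u v : ℤ) : ℕ :=
  Set.ncard {x : Fin n → ZMod q |
    ∀ i j : Fin n, i < j → Avoids (x i - x j) u v ∧ Avoids (x i + x j) u v}

/-- `1 + y + y^2 + ... + y^(m-1)`. -/
noncomputable def phi (m : ℕ) : ℚ[X] := ∑ i ∈ Finset.range m, X ^ i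

/-- `1 + y^2 + y^4 + ... + y^(2(m-1))`. -/
noncomputable def phi2 (m : ℕ) : ℚ[X] := ∑ i ∈ Finset.range m, X ^ (2 * i)

/-- For `g = ∑_k g_k y^k`, the sum `∑_k g_k (q - k)^n`. -/
noncomputable def polysum (g : ℚ[X]) (q n : ℕ) : ℚ :=
  ∑ k ∈ Finset.range (g.natDegree + 1), g.coeff k * ((q : ℚ) - (k : ℚ)) ^ n

/-- shift operator -/
noncomputable def shT : Module.End ℚ (ℤ → ℚ) where
  toFun F := fun t => F (t - 1)
  map_add' _ _ := rfl
  map_smul' _ _ := rfl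

theorem shT_pow (k : ℕ) (F : ℤ → ℚ) (t : ℤ) : (shT ^ k) F t = F (t - k) := by
  induction k generalizing F t with
  | zero => simp
  | succ k ih =>
    rw [pow_succ, Module.End.mul_apply, ih]
    show F _ = _
    congr 1; push_cast; ring

theorem polysum_eq (g : ℚ[X]) (q n : ℕ) :
    polysum g q n = (aeval shT g) (fun t => (t : ℚ) ^ n) (q : ℤ) := by
  rw [aeval_eq_sum_range, LinearMap.sum_apply, Finset.sum_apply]
  unfold polysum
  refine Finset.sum_congr rfl fun k _ => ?_
  simp [shT_pow]

/-- `1 + y^s + ... + y^(s(c-1))`. -/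
noncomputable def Dp (r : ℕ × ℕ) : ℚ[X] := ∑ e ∈ Finset.range r.2, X ^ (r.1 * e)

theorem Dp_apply (r : ℕ × ℕ) (F : ℤ → ℚ) (t : ℤ) :
    aeval shT (Dp r) F t = ∑ e ∈ Finset.range r.2, F (t - (r.1 * e : ℕ)) := by
  unfold Dp
  simp only [map_sum, map_pow, aeval_X, LinearMap.sum_apply, Finset.sum_apply, shT_pow]

theorem vanish (l : List (ℕ × ℕ)) : ∀ (k : ℕ) (χ : ℤ → ℚ),
    (∀ r ∈ l, aeval shT (Dp r) χ = 0) → k < l.length →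
    aeval shT (l.map Dp).prod (fun t => (t : ℚ) ^ k * χ t) = 0 := by
  induction l with
  | nil => intro k χ _ h; simp at h
  | cons r l ih =>
    intro k χ hχ hk
    rw [List.map_cons, List.prod_cons, mul_comm, map_mul, Module.End.mul_apply]
    have key : aeval shT (Dp r) (fun t => (t : ℚ) ^ k * χ t) =
        ∑ j ∈ Finset.range k, (k.choose j : ℚ) •
          (fun t : ℤ => (t : ℚ) ^ j *
            (∑ e ∈ Finset.range r.2, (-((r.1 * e : ℕ) : ℚ)) ^ (k - j) •
              (shT ^ (r.1 * e)) χ) t) := by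
      funext t
      rw [Dp_apply, Finset.sum_apply]
      have h0 : ∑ e ∈ Finset.range r.2, χ (t - (r.1 * e : ℕ)) = 0 := by
        have := congrFun (hχ r (by simp)) t
        rwa [Dp_apply] at this
      have h1 : ∀ e : ℕ, (((t - (r.1 * e : ℕ) : ℤ) : ℚ)) ^ k =
          ∑ j ∈ Finset.range k, (t : ℚ) ^ j * (-((r.1 * e : ℕ) : ℚ)) ^ (k - j) * (k.choose j : ℚ)
            + (t : ℚ) ^ k := by
        intro e
        have := add_pow (t : ℚ) (-((r.1 * e : ℕ) : ℚ)) k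
        rw [Finset.sum_range_succ] at this
        simp only [Nat.sub_self, pow_zero, Nat.choose_self, Nat.cast_one, mul_one] at this
        rw [← this]; push_cast; ring
      simp only [h1, add_mul, Finset.sum_add_distrib]
      rw [← Finset.mul_sum, h0, mul_zero, add_zero]
      simp only [Finset.sum_mul]
      rw [Finset.sum_comm]
      refine Finset.sum_congr rfl fun j _ => ?_
      simp only [Pi.smul_apply, smul_eq_mul, Finset.sum_apply, shT_pow, Finset.mul_sum]
      refine Finset.sum_congr rfl fun e _ => ?_
      ring
    rw [key, map_sum]
    refine Finset.sum_eq_zero fun j hj => ?_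
    rw [map_smul, ih, smul_zero]
    · intro r' hr'
      rw [map_sum]
      refine Finset.sum_eq_zero fun e _ => ?_
      rw [map_smul]
      have : (aeval shT (Dp r')) ((shT ^ (r.1 * e)) χ)
          = (shT ^ (r.1 * e)) ((aeval shT (Dp r')) χ) := by
        have h : shT ^ (r.1 * e) = aeval shT (X ^ (r.1 * e) : ℚ[X]) := by simp
        rw [h, ← Module.End.mul_apply, ← map_mul, mul_comm, map_mul, Module.End.mul_apply]
      rw [this, hχ r' (by simp [hr'])]
      simp
    · simp at hj hk; omega

theorem phi_eq (b : ℕ) : phi b = Dp (1, b) := by simp [phi, Dp]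

theorem phi2_eq (b : ℕ) : phi2 b = Dp (2, b) := by simp [phi2, Dp]

theorem count_poly (n b : ℕ) (F : ℤ → ℚ) (q : ℤ) :
    aeval shT (phi2 b ^ n * phi b) F q =
      ∑ ef ∈ (Fintype.piFinset fun _ : Fin n => Finset.range b) ×ˢ Finset.range b,
        F (q - 2 * ((∑ i, ef.1 i : ℕ) : ℤ) - (ef.2 : ℤ)) := by
  have h : phi2 b ^ n = ∑ e ∈ Fintype.piFinset fun _ : Fin n => Finset.range b,
      (X : ℚ[X]) ^ (2 * ∑ i, e i) := by
    have := Finset.prod_univ_sum (fun _ : Fin n => Finset.range b)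
      (fun _ j => (X : ℚ[X]) ^ (2 * j))
    simp only [Finset.prod_const, Finset.card_univ, Fintype.card_fin] at this
    unfold phi2
    rw [this]
    refine Finset.sum_congr rfl fun e _ => ?_
    rw [Finset.prod_pow_eq_pow_sum, Finset.mul_sum]
  rw [h, phi, Finset.sum_mul_sum, Finset.sum_product]
  simp only [map_sum, LinearMap.sum_apply, Finset.sum_apply]
  refine Finset.sum_congr rfl fun e _ => Finset.sum_congr rfl fun f _ => ?_
  rw [← pow_add, map_pow, aeval_X, shT_pow]
  congr 1; push_cast; ring

theorem dvd_sum1 (b : ℕ) (hb : 0 < b) (t : ℤ) :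
    ∑ e ∈ Finset.range b, (if (b : ℤ) ∣ t - e then (1 : ℚ) else 0) = 1 := by
  have hb' : (b : ℤ) ≠ 0 := by omega
  have h1 := Int.emod_nonneg t hb'
  have h2 := Int.emod_lt_of_pos t (show (0 : ℤ) < b by omega)
  rw [Finset.sum_eq_single (t % b).toNat]
  · rw [if_pos]
    rw [Int.toNat_of_nonneg h1]
    exact Int.dvd_self_sub_emod
  · intro e he hne
    rw [if_neg]
    intro hd
    simp at he
    apply hne
    have h3 : t % b = (e : ℤ) % b := ((Int.emod_eq_emod_iff_emod_sub_eq_zero.2 (Int.emod_eq_zero_of_dvd hd)))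
    rw [Int.emod_eq_of_lt (a := (e : ℤ)) (by omega) (by omega)] at h3
    omega
  · intro h; exfalso; apply h; simp; omega
theorem dvd_sum2 (b : ℕ) (hb : Odd b) (t : ℤ) :
    ∑ e ∈ Finset.range b, (if (b : ℤ) ∣ t - (2 * e : ℕ) then (1 : ℚ) else 0) = 1 := by
  obtain ⟨h, rfl⟩ := hb
  refine Eq.trans ?_ (dvd_sum1 (2 * h + 1) (by omega) (t * (h + 1)))
  refine Finset.sum_congr rfl fun e _ => ?_
  congr 1
  apply propext
  constructor
  · rintro ⟨k, hk⟩
    refine ⟨k * (h + 1) + e, ?_⟩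
    push_cast at *
    linear_combination (h + 1 : ℤ) * hk
  · rintro ⟨k, hk⟩
    refine ⟨2 * k - t, ?_⟩
    push_cast at *
    linear_combination (2 : ℤ) * hk

theorem dvd_sum3 (c : ℕ) (hc : 0 < c) (t : ℤ) :
    ∑ e ∈ Finset.range c, (if ((2 * c : ℕ) : ℤ) ∣ t - (2 * e : ℕ) then (1 : ℚ) else 0) =
      if (2 : ℤ) ∣ t then 1 else 0 := by
  split_ifs with h
  · obtain ⟨s, rfl⟩ := h
    refine Eq.trans ?_ (dvd_sum1 c hc s)
    refine Finset.sum_congr rfl fun e _ => ?_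
    congr 1
    apply propext
    constructor
    · rintro ⟨k, hk⟩
      refine ⟨k, ?_⟩
      push_cast at *
      linarith
    · rintro ⟨k, hk⟩
      refine ⟨k, ?_⟩
      push_cast at *
      linarith
  · refine Finset.sum_eq_zero fun e _ => if_neg ?_
    rintro ⟨k, hk⟩
    apply h
    refine ⟨c * k + e, ?_⟩
    push_cast at *
    linarith

/-- scaled power supported on multiples of `b` -/
noncomputable def FF (n b : ℕ) (t : ℤ) : ℚ := if (b : ℤ) ∣ t then ((t / b : ℤ) : ℚ) ^ n else 0

theorem FF_eq (n b : ℕ) (hb : 0 < b) (t : ℤ) :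
    (b : ℚ) ^ n * FF n b t = (t : ℚ) ^ n * (if (b : ℤ) ∣ t then (1 : ℚ) else 0) := by
  unfold FF
  split_ifs with h
  · obtain ⟨s, rfl⟩ := h
    rw [Int.mul_ediv_cancel_left _ (by omega)]
    push_cast; ring
  · simp

theorem even_case (n b q : ℕ) (hb : Odd b) :
    (b : ℚ) ^ (n + 1) * aeval shT (phi2 b ^ n * phi b) (FF n b) q =
      polysum (phi2 b ^ n * phi b) q n := by
  have hb0 : 0 < b := hb.pos
  rw [polysum_eq]
  set χ : ℤ → ℚ := fun t => (b : ℚ) * (if (b : ℤ) ∣ t then (1 : ℚ) else 0) - 1 with hχ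
  have h := vanish (List.replicate n (2, b) ++ [(1, b)]) n χ (by
    intro r hr
    simp only [List.mem_append, List.mem_replicate, List.mem_singleton] at hr
    funext t
    rw [Dp_apply]
    rcases hr with ⟨-, rfl⟩ | rfl
    · simp only [hχ, Finset.sum_sub_distrib]
      rw [← Finset.mul_sum, dvd_sum2 b hb]; simp
    · simp only [hχ, Finset.sum_sub_distrib]
      rw [← Finset.mul_sum]
      simp only [one_mul]
      rw [dvd_sum1 b hb0]; simp) (by simp)
  simp only [List.map_append, List.map_replicate, List.prod_append, List.prod_replicate,
    List.map_cons, List.map_nil, List.prod_cons, List.prod_nil, mul_one] at h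
  rw [← phi_eq, ← phi2_eq] at h
  have e : (fun t : ℤ => (t : ℚ) ^ n * χ t) =
      (b : ℚ) ^ (n + 1) • FF n b - (fun t : ℤ => (t : ℚ) ^ n) := by
    funext t
    simp only [hχ, Pi.sub_apply, Pi.smul_apply, smul_eq_mul]
    have := FF_eq n b hb0 t
    rw [pow_succ]
    linear_combination (-(b : ℚ)) * this
  rw [e, map_sub, map_smul] at h
  have := congrFun h (q : ℤ)
  simp only [Pi.sub_apply, Pi.smul_apply, smul_eq_mul, Pi.zero_apply] at this
  linarith

theorem odd_supp (g : ℚ[X]) (F : ℤ → ℚ) (s : ℤ) (hg : ∀ k, Odd k → g.coeff k = 0)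
    (hF : ∀ t : ℤ, (2 : ℤ) ∣ t - s → F t = 0) (q : ℤ) (hq : (2 : ℤ) ∣ q - s) :
    aeval shT g F q = 0 := by
  rw [aeval_eq_sum_range, LinearMap.sum_apply, Finset.sum_apply]
  refine Finset.sum_eq_zero fun k _ => ?_
  simp only [LinearMap.smul_apply, Pi.smul_apply, shT_pow, smul_eq_mul]
  rcases Nat.even_or_odd k with hk | hk
  · rw [hF, mul_zero]
    obtain ⟨j, rfl⟩ := hk
    push_cast; omega
  · rw [hg k hk, zero_mul]

theorem phi2_expand (c : ℕ) : phi2 c = Polynomial.expand ℚ 2 (phi c) := by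
  simp [phi2, phi, pow_mul]

theorem odd_case (n c q : ℕ) (hc : 0 < c) (hq : Odd q) :
    ((2 * c : ℕ) : ℚ) ^ (n + 1) * aeval shT (phi2 (2 * c) ^ n * phi (2 * c)) (FF n (2 * c)) q =
      2 * polysum (X * phi2 (2 * c) ^ n * phi2 c) q n := by
  have hb0 : 0 < 2 * c := by omega
  have hq2 : ¬ (2 : ℤ) ∣ (q : ℤ) := by
    obtain ⟨j, rfl⟩ := hq; push_cast; omega
  have hG : ∀ k, Odd k → (phi2 (2 * c) ^ n * phi2 c).coeff k = 0 := by
    intro k hk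
    rw [phi2_expand, phi2_expand, ← map_pow, ← map_mul, Polynomial.coeff_expand (by norm_num),
      if_neg]
    obtain ⟨j, rfl⟩ := hk; omega
  have hphi : phi (2 * c) = phi2 c * (1 + X) := by
    unfold phi phi2
    clear hG hb0 hc
    induction c with
    | zero => simp
    | succ c ih =>
      rw [Nat.mul_succ, Finset.sum_range_succ, Finset.sum_range_succ, ih,
        Finset.sum_range_succ]
      ring
  rw [polysum_eq]
  set χ : ℤ → ℚ := fun t => (c : ℚ) * (if ((2 * c : ℕ) : ℤ) ∣ t then (1 : ℚ) else 0) -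
    (if (2 : ℤ) ∣ t then 1 else 0) with hχ
  have hz : aeval shT (Dp (2, c)) χ = 0 := by
    funext t
    rw [Dp_apply]
    simp only [hχ, Finset.sum_sub_distrib]
    rw [← Finset.mul_sum, dvd_sum3 c hc]
    have : ∀ e : ℕ, ((2 : ℤ) ∣ t - (2 * e : ℕ)) = ((2 : ℤ) ∣ t) := by
      intro e; apply propext; push_cast; omega
    simp only [this]
    simp
  have hD : Dp (2, 2 * c) = (1 + X ^ (2 * c)) * Dp (2, c) := by
    unfold Dp
    simp only
    rw [two_mul, Finset.sum_range_add, add_mul, one_mul, Finset.mul_sum]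
    congr 1
    refine Finset.sum_congr rfl fun e _ => ?_
    rw [← pow_add]; congr 1; ring
  have h := vanish (List.replicate n (2, 2 * c) ++ [(2, c)]) n χ (by
    intro r hr
    simp only [List.mem_append, List.mem_replicate, List.mem_singleton] at hr
    rcases hr with ⟨-, rfl⟩ | rfl
    · rw [hD, map_mul, Module.End.mul_apply, hz, map_zero]
    · exact hz) (by simp)
  simp only [List.map_append, List.map_replicate, List.prod_append, List.prod_replicate,
    List.map_cons, List.map_nil, List.prod_cons, List.prod_nil, mul_one] at h
  rw [← phi2_eq, ← phi2_eq] at h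
  set G := phi2 (2 * c) ^ n * phi2 c with hGd
  have e1 : X * phi2 (2 * c) ^ n * phi2 c = G * X := by rw [hGd]; ring
  have e2 : phi2 (2 * c) ^ n * phi (2 * c) = G + G * X := by rw [hGd, hphi]; ring
  have hGX : ∀ F, aeval shT (G * X) F (q : ℤ) = aeval shT G F (q - 1 : ℤ) := by
    intro F
    rw [mul_comm, map_mul, aeval_X]; rfl
  rw [e1, e2, map_add, LinearMap.add_apply, Pi.add_apply, hGX, hGX]
  rw [odd_supp G (FF n (2 * c)) 1 hG ?_ q (by omega), zero_add]
  · have e : (fun t : ℤ => (t : ℚ) ^ n * χ t) =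
        ((2 * c : ℕ) : ℚ) ^ n • (c : ℚ) • FF n (2 * c) - (fun t : ℤ => (t : ℚ) ^ n)
        + (fun t : ℤ => (t : ℚ) ^ n * (if (2 : ℤ) ∣ t then 0 else 1)) := by
      funext t
      simp only [hχ, Pi.sub_apply, Pi.add_apply, Pi.smul_apply, smul_eq_mul]
      have := FF_eq n (2 * c) hb0 t
      have h2 : (if (2 : ℤ) ∣ t then (1 : ℚ) else 0) = 1 - (if (2 : ℤ) ∣ t then 0 else 1) := by
        split_ifs <;> norm_num
      rw [h2]
      linear_combination (-(c : ℚ)) * this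
    rw [e, map_add, map_sub, map_smul, map_smul] at h
    have := congrFun h (q - 1 : ℤ)
    simp only [Pi.sub_apply, Pi.add_apply, Pi.smul_apply, smul_eq_mul, Pi.zero_apply] at this
    rw [odd_supp G (fun t : ℤ => (t : ℚ) ^ n * (if (2 : ℤ) ∣ t then 0 else 1)) 0 hG ?_ (q - 1 : ℤ) (by omega)] at this
    · have h2 : ((2 * c : ℕ) : ℚ) ^ (n + 1) = 2 * (((2 * c : ℕ) : ℚ) ^ n * c) := by
        rw [pow_succ]; push_cast; ring
      rw [h2]
      linarith
    · intro t ht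
      rw [if_pos (by omega), mul_zero]
  · intro t ht
    unfold FF
    rw [if_neg]
    rintro ⟨k, rfl⟩
    push_cast at ht
    rw [mul_assoc] at ht
    omega
/-- gap conditions -/
def Zp {p : ℕ} (d0 : ℤ) (d : Fin p → ℤ) (dl b q : ℤ) (z : Fin (p + 1) → ℤ) : Prop :=
  b * d0 ≤ z 0 ∧ (∀ i : Fin p, b * d i ≤ z i.succ - z i.castSucc) ∧
    b * dl ≤ q - 2 * z (Fin.last p)

open Classical in
/-- finite set of solutions of the gap conditions -/
noncomputable def ZF {p : ℕ} (d0 : ℤ) (d : Fin p → ℤ) (dl b q : ℤ) :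
    Finset (Fin (p + 1) → ℤ) :=
  (Fintype.piFinset fun _ => Finset.Icc 0 q).filter (Zp d0 d dl b q)

theorem Zp_mono {p : ℕ} {d0 : ℤ} {d : Fin p → ℤ} {dl b q : ℤ} {z : Fin (p + 1) → ℤ}
    (hd : ∀ i, 0 ≤ d i) (hb : 0 ≤ b) (h : Zp d0 d dl b q z) : Monotone z := by
  rw [Fin.monotone_iff_le_succ]
  intro i
  have := h.2.1 i
  have := mul_nonneg hb (hd i)
  linarith

theorem Zp_range {p : ℕ} {d0 : ℤ} {d : Fin p → ℤ} {dl b q : ℤ} {z : Fin (p + 1) → ℤ}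
    (hd0 : 0 ≤ d0) (hd : ∀ i, 0 ≤ d i) (hdl : 0 ≤ dl) (hb : 0 ≤ b) (h : Zp d0 d dl b q z)
    (i : Fin (p + 1)) : 0 ≤ z i ∧ 2 * z i ≤ q := by
  have hm := Zp_mono hd hb h
  have h1 := hm (Fin.zero_le i)
  have h2 := hm (Fin.le_last i)
  have h3 := h.1
  have h4 := h.2.2
  have := mul_nonneg hb hd0
  have := mul_nonneg hb hdl
  constructor <;> linarith

theorem mem_ZF {p : ℕ} {d0 : ℤ} {d : Fin p → ℤ} {dl b q : ℤ} {z : Fin (p + 1) → ℤ}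
    (hd0 : 0 ≤ d0) (hd : ∀ i, 0 ≤ d i) (hdl : 0 ≤ dl) (hb : 0 ≤ b) :
    z ∈ ZF d0 d dl b q ↔ Zp d0 d dl b q z := by
  unfold ZF
  simp only [Finset.mem_filter, Fintype.mem_piFinset, Finset.mem_Icc, and_iff_right_iff_imp]
  intro h i
  have := Zp_range hd0 hd hdl hb h i
  constructor <;> linarith

/-- gaps -/
def gap {p : ℕ} (z : Fin (p + 1) → ℤ) : Fin (p + 1) → ℤ :=
  Fin.cases (z 0) (fun i => z i.succ - z i.castSucc)

theorem exists_psum {p : ℕ} (e : Fin (p + 1) → ℕ) : ∃ E : Fin (p + 1) → ℤ,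
    E 0 = e 0 ∧ (∀ i : Fin p, E i.succ = E i.castSucc + e i.succ) ∧
    E (Fin.last p) = ((∑ i, e i : ℕ) : ℤ) := by
  refine ⟨fun i => ((∑ k ∈ Finset.range ((i : ℕ) + 1),
    (if h : k < p + 1 then e ⟨k, h⟩ else 0) : ℕ) : ℤ), ?_, ?_, ?_⟩
  · simp
  · intro i
    simp only [Fin.val_succ, Fin.val_castSucc]
    rw [Finset.sum_range_succ]
    have : (i : ℕ) + 1 < p + 1 := by omega
    simp only [this, dif_pos]
    push_cast
    rfl
  · simp only [Fin.val_last]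
    rw [Finset.sum_range]
    congr 1
    refine Finset.sum_congr rfl fun x _ => ?_
    rw [dif_pos x.2]

theorem card_ZF {p : ℕ} {d0 : ℤ} {d : Fin p → ℤ} {dl : ℤ}
    (hd0 : 0 ≤ d0) (hd : ∀ i, 0 ≤ d i) (hdl : 0 ≤ dl) (b : ℕ) (hb : 0 < b) (q : ℤ) :
    (ZF d0 d dl b q).card =
      ∑ ef ∈ (Fintype.piFinset fun _ : Fin (p + 1) => Finset.range b) ×ˢ Finset.range b,
        if (b : ℤ) ∣ q - 2 * ((∑ i, ef.1 i : ℕ) : ℤ) - (ef.2 : ℤ) then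
          (ZF d0 d dl 1 ((q - 2 * ((∑ i, ef.1 i : ℕ) : ℤ) - (ef.2 : ℤ)) / b)).card else 0 := by
  have hb0 : (b : ℤ) ≠ 0 := by omega
  have hbp : (0 : ℤ) < b := by omega
  let ρ : (Fin (p + 1) → ℤ) → (Fin (p + 1) → ℕ) × ℕ := fun z =>
    (fun i => (gap z i % b).toNat, ((q - 2 * z (Fin.last p)) % b).toNat)
  rw [Finset.card_eq_sum_card_fiberwise (f := ρ)
    (t := (Fintype.piFinset fun _ : Fin (p + 1) => Finset.range b) ×ˢ Finset.range b)]
  swap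
  · intro z _
    have hr : ∀ x : ℤ, (x % b).toNat < b := fun x => by
      have := Int.emod_lt_of_pos x hbp
      omega
    simp [ρ, hr]
  refine Finset.sum_congr rfl ?_
  rintro ⟨e, f⟩ hef
  simp only [Finset.mem_product, Fintype.mem_piFinset, Finset.mem_range] at hef
  obtain ⟨he, hf⟩ := hef
  obtain ⟨E, hE0, hEs, hEl⟩ := exists_psum e
  simp only
  rw [← hEl]
  -- characterization of the fibre
  have toN : ∀ (x : ℤ) (k : ℕ), k < b → ((x % b).toNat = k ↔ (b : ℤ) ∣ x - k) := by
    intro x k hk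
    have h1 := Int.emod_nonneg x hb0
    rw [← Int.emod_eq_emod_iff_emod_sub_eq_zero.trans (Int.dvd_iff_emod_eq_zero).symm,
      Int.emod_eq_of_lt (a := (k : ℤ)) (by omega) (by omega)]
    omega
  have fib : ∀ z, ρ z = (e, f) ↔
      (∀ i, (b : ℤ) ∣ z i - E i) ∧ (b : ℤ) ∣ (q - 2 * z (Fin.last p)) - f := by
    intro z
    simp only [ρ, Prod.mk.injEq, funext_iff]
    rw [toN _ _ hf]
    refine and_congr_left fun _ => ?_
    constructor
    · intro h i
      induction i using Fin.induction with
      | zero =>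
        have := (toN _ _ (he 0)).1 (h 0)
        rw [hE0]; exact this
      | succ i ih =>
        have h1 := (toN _ _ (he i.succ)).1 (h i.succ)
        obtain ⟨k2, h2⟩ := ih
        obtain ⟨k1, h1⟩ := h1
        simp only [gap, Fin.cases_succ] at h1
        exact ⟨k1 + k2, by rw [hEs]; linear_combination h1 + h2⟩
    · intro h i
      rw [toN _ _ (he i)]
      refine Fin.cases ?_ (fun i => ?_) i
      · have := h 0
        rw [hE0] at this; exact this
      · obtain ⟨k1, h1⟩ := h i.succ
        obtain ⟨k2, h2⟩ := h i.castSucc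
        rw [hEs] at h1
        simp only [gap, Fin.cases_succ]
        exact ⟨k1 - k2, by linear_combination h1 - h2⟩
  split_ifs with hdv
  · obtain ⟨m, hm⟩ := hdv
    rw [hm, Int.mul_ediv_cancel_left _ hb0]
    have hq : q = b * m + 2 * E (Fin.last p) + f := by linarith
    have hfb : (f : ℤ) < b := by omega
    have key : ∀ x y r : ℤ, 0 ≤ r → r < b → (b * x ≤ b * y + r ↔ x ≤ y) := by
      intro x y r h1 h2
      constructor
      · intro h
        by_contra hlt
        have : y + 1 ≤ x := by omega
        nlinarith
      · intro h
        nlinarith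
    have iffZ : ∀ z' : Fin (p + 1) → ℤ,
        Zp d0 d dl b q (fun i => b * z' i + E i) ↔ Zp d0 d dl 1 m z' := by
      intro z'
      unfold Zp
      simp only [one_mul]
      refine and_congr ?_ (and_congr (forall_congr' fun i => ?_) ?_)
      · rw [hE0]
        have := he 0
        exact key _ _ _ (by omega) (by omega)
      · have := he i.succ
        rw [← key (d i) _ (e i.succ) (by omega) (by omega), hEs]
        ring_nf
      · rw [← key dl _ f (by omega) (by omega), hq]
        ring_nf
    refine Finset.card_nbij' (fun z i => (z i - E i) / b) (fun z' i => b * z' i + E i) ?_ ?_ ?_ ?_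
    · intro z hz
      simp only [Finset.coe_filter, Set.mem_ofPred_eq, mem_ZF hd0 hd hdl hbp.le, fib] at hz
      simp only [Finset.mem_coe, mem_ZF hd0 hd hdl zero_le_one]
      rw [← iffZ]
      convert hz.1 using 2 with i
      rw [Int.mul_ediv_cancel' (hz.2.1 i)]
      ring
    · intro z' hz
      simp only [Finset.mem_coe, mem_ZF hd0 hd hdl zero_le_one] at hz
      simp only [Finset.coe_filter, Set.mem_ofPred_eq, mem_ZF hd0 hd hdl hbp.le, fib]
      refine ⟨(iffZ _).2 hz, fun i => ⟨z' i, by ring⟩, ⟨m - 2 * z' (Fin.last p), ?_⟩⟩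
      rw [hq]; ring
    · intro z hz
      simp only [Finset.coe_filter, Set.mem_ofPred_eq, mem_ZF hd0 hd hdl hbp.le, fib] at hz
      funext i
      simp only
      rw [Int.mul_ediv_cancel' (hz.2.1 i)]
      ring
    · intro z' _
      funext i
      simp only
      rw [add_sub_cancel_right, Int.mul_ediv_cancel_left _ hb0]
  · rw [Finset.card_eq_zero, Finset.filter_eq_empty_iff]
    intro z _ hz
    rw [fib] at hz
    apply hdv
    obtain ⟨k1, h1⟩ := hz.2
    obtain ⟨k2, h2⟩ := hz.1 (Fin.last p)
    exact ⟨k1 + 2 * k2, by linear_combination h1 + 2 * h2⟩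
/-- sign pattern -/
def sg {n : ℕ} (X : Fin n → ℤ) : Fin n → Bool := fun i => decide (0 < X i)

/-- rank of signed labels -/
def kap {n : ℕ} (ε : Fin n → Bool) (i : Fin n) : ℤ :=
  if ε i then (i : ℕ) else 2 * (n : ℤ) - (i : ℕ)

/-- validity of symmetric integer representatives -/
def VV {n : ℕ} (b q : ℤ) (X : Fin n → ℤ) : Prop :=
  (∀ i, -q < 2 * X i ∧ 2 * X i ≤ q) ∧ (∀ i, 0 < X i → b ≤ X i) ∧
  (∀ i, X i ≤ 0 → b ≤ q + 2 * X i) ∧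
  ∀ i j, kap (sg X) i < kap (sg X) j → |X i| ≤ |X j| ∨ b ≤ |X i| - |X j|

open Classical in
/-- finite set of valid representatives -/
noncomputable def VF (n : ℕ) (b q : ℤ) : Finset (Fin n → ℤ) :=
  (Fintype.piFinset fun _ => Finset.Icc (-q) q).filter (VV b q)

theorem mem_VF {n : ℕ} {b q : ℤ} {X : Fin n → ℤ} : X ∈ VF n b q ↔ VV b q X := by
  unfold VF
  simp only [Finset.mem_filter, Fintype.mem_piFinset, Finset.mem_Icc, and_iff_right_iff_imp]
  intro h i
  have := h.1 i
  omega

theorem avoids_iff {q : ℕ} (a : ℕ) (haq : a < q) (x : ZMod q) (Z : ℤ) (hx : x = (Z : ZMod q))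
    (h1 : -(q : ℤ) < Z) (h2 : Z ≤ q) :
    Avoids x 1 a ↔ ¬ (1 ≤ Z ∧ Z ≤ a) ∧ ¬ (1 ≤ Z + q ∧ Z + q ≤ a) := by
  unfold Avoids
  subst hx
  constructor
  · intro h
    refine ⟨fun hh => h Z hh.1 hh.2 rfl, fun hh => h (Z + q) hh.1 hh.2 ?_⟩
    simp
  · rintro ⟨g1, g2⟩ k hk1 hk2 he
    rw [ZMod.intCast_eq_intCast_iff_dvd_sub] at he
    obtain ⟨m, hm⟩ := he
    have hm1 : -1 < m := by
      by_contra hc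
      have : m ≤ -1 := by omega
      nlinarith
    have hm2 : m < 2 := by
      by_contra hc
      have : 2 ≤ m := by omega
      nlinarith
    have : m = 0 ∨ m = 1 := by omega
    rcases this with rfl | rfl
    · exact g1 (by omega)
    · exact g2 (by omega)

theorem valid_iff {n q a : ℕ} (haq : 4 * a < q) (X : Fin n → ℤ)
    (hX : ∀ i, -(q : ℤ) < 2 * X i ∧ 2 * X i ≤ q) :
    ((∀ i, Avoids (X i : ZMod q) 1 a ∧ Avoids (2 * (X i : ZMod q)) 1 a) ∧
    ∀ i j : Fin n, i < j → Avoids ((X i : ZMod q) - (X j : ZMod q)) 1 a ∧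
      Avoids ((X i : ZMod q) + (X j : ZMod q)) 1 a) ↔ VV ((a : ℤ) + 1) q X := by
  have e1 : ∀ i, Avoids (X i : ZMod q) 1 a ↔ _ := fun i =>
    avoids_iff a (by omega) _ (X i) rfl (by have := hX i; omega) (by have := hX i; omega)
  have e2 : ∀ i, Avoids (2 * (X i : ZMod q)) 1 a ↔ _ := fun i =>
    avoids_iff a (by omega) _ (2 * X i) (by push_cast; rfl)
      (by have := hX i; omega) (by have := hX i; omega)
  have e3 : ∀ i j, Avoids ((X i : ZMod q) - (X j : ZMod q)) 1 a ↔ _ := fun i j =>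
    avoids_iff a (by omega) _ (X i - X j) (by push_cast; rfl)
      (by have := hX i; have := hX j; omega) (by have := hX i; have := hX j; omega)
  have e4 : ∀ i j, Avoids ((X i : ZMod q) + (X j : ZMod q)) 1 a ↔ _ := fun i j =>
    avoids_iff a (by omega) _ (X i + X j) (by push_cast; rfl)
      (by have := hX i; have := hX j; omega) (by have := hX i; have := hX j; omega)
  simp only [e1, e2, e3, e4]
  clear e1 e2 e3 e4
  have hkap : ∀ i, (0 < X i ∧ kap (sg X) i = (i : ℕ)) ∨
      (X i ≤ 0 ∧ kap (sg X) i = 2 * (n : ℤ) - (i : ℕ)) := by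
    intro i
    by_cases h : 0 < X i
    · left; simp [kap, sg, h]
    · right; simp [kap, sg, h]; omega
  have habs : ∀ i, (0 < X i ∧ |X i| = X i) ∨ (X i ≤ 0 ∧ |X i| = - X i) := by
    intro i
    by_cases h : 0 < X i
    · left; exact ⟨h, abs_of_pos h⟩
    · right; exact ⟨by omega, abs_of_nonpos (by omega)⟩
  constructor
  · rintro ⟨hA, hB⟩
    refine ⟨hX, ?_, ?_, ?_⟩
    · intro i hi
      have := hA i; omega
    · intro i hi
      have := hA i; have := hX i; omega
    · intro i j hij
      have ki := hkap i
      have kj := hkap j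
      have ai := habs i
      have aj := habs j
      have := i.2
      have := j.2
      have := hX i
      have := hX j
      rcases lt_trichotomy i j with h | h | h
      · have := hB i j h
        have h' : (i : ℕ) < j := h
        omega
      · subst h; omega
      · have := hB j i h
        have h' : (j : ℕ) < i := h
        omega
  · rintro ⟨-, hA, hB, hC⟩
    refine ⟨fun i => ?_, fun i j hij => ?_⟩
    · have := hA i; have := hB i; have := hX i; omega
    · have ki := hkap i
      have kj := hkap j
      have ai := habs i
      have aj := habs j
      have := i.2
      have := j.2
      have := hX i
      have := hX j
      have h' : (i : ℕ) < j := hij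
      have := hC i j
      have := hC j i
      have := hA i
      have := hA j
      have := hB i
      have := hB j
      omega

theorem N_eq_VF {n q a : ℕ} (haq : 4 * a < q) :
    N_BC n q 1 a = (VF n ((a : ℤ) + 1) q).card := by
  have : NeZero q := ⟨by omega⟩
  unfold N_BC
  rw [← Set.ncard_coe_finset]
  refine Set.ncard_congr (fun x _ => fun i => (x i).valMinAbs) ?_ ?_ ?_
  · intro x hx
    rw [Finset.mem_coe, mem_VF, ← valid_iff haq]
    · simp only [ZMod.coe_valMinAbs]
      exact hx
    · intro i
      have := ZMod.valMinAbs_mem_Ioc (x i)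
      simp only [Set.mem_Ioc] at this
      omega
  · intro x y _ _ h
    funext i
    exact ZMod.injective_valMinAbs (congrFun h i)
  · intro X hX
    rw [Finset.mem_coe, mem_VF] at hX
    refine ⟨fun i => (X i : ZMod q), (valid_iff haq X hX.1).2 hX, ?_⟩
    funext i
    rw [ZMod.valMinAbs_spec]
    have := hX.1 i
    exact ⟨rfl, by simp only [Set.mem_Ioc]; omega⟩

theorem VF_one (n q : ℕ) (hq : 0 < q) : (VF n 1 q).card = q ^ n := by
  have : NeZero q := ⟨by omega⟩
  have h := N_eq_VF (n := n) (q := q) (a := 0) (by omega)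
  simp only [Nat.cast_zero, zero_add] at h
  rw [← h]
  unfold N_BC
  have hA : ∀ x : ZMod q, Avoids x 1 0 := by
    intro x k h1 h2; omega
  simp only [hA, and_self, implies_true]
  rw [Set.ofPred_true]
  rw [Set.ncard_univ]
  simp

/-- sort key -/
def KK {n : ℕ} (X : Fin n → ℤ) (i : Fin n) : ℤ := |X i| * (2 * n + 1) + kap (sg X) i

theorem kap_range {n : ℕ} (ε : Fin n → Bool) (i : Fin n) :
    0 ≤ kap ε i ∧ kap ε i < 2 * n + 1 := by
  unfold kap
  have := i.2
  split_ifs <;> omega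

theorem kap_inj {n : ℕ} (ε : Fin n → Bool) : Function.Injective (kap ε) := by
  intro i j h
  unfold kap at h
  have := i.2
  have := j.2
  ext
  split_ifs at h <;> omega

theorem kap_pos_of_lt {n : ℕ} (ε : Fin n → Bool) (i j : Fin n) (h : kap ε i < kap ε j)
    (hj : ε j = true) : ε i = true := by
  by_contra hi
  simp only [kap, hj, hi, if_true] at h
  have := i.2
  have := j.2
  simp at h
  omega

theorem KK_lt {n : ℕ} (X : Fin n → ℤ) (i j : Fin n) :
    KK X i < KK X j ↔ |X i| < |X j| ∨ (|X i| = |X j| ∧ kap (sg X) i < kap (sg X) j) := by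
  have h1 := kap_range (sg X) i
  have h2 := kap_range (sg X) j
  unfold KK
  constructor
  · intro h
    rcases lt_trichotomy (|X i|) (|X j|) with h3 | h3 | h3
    · exact Or.inl h3
    · rw [h3] at h
      exact Or.inr ⟨h3, by linarith⟩
    · nlinarith
  · rintro (h | ⟨h, h'⟩)
    · nlinarith
    · rw [h]; linarith

theorem KK_inj {n : ℕ} (X : Fin n → ℤ) : Function.Injective (KK X) := by
  intro i j h
  by_contra hne
  have h1 : ¬ KK X i < KK X j := by omega
  have h2 : ¬ KK X j < KK X i := by omega
  rw [KK_lt] at h1 h2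
  have : kap (sg X) i ≠ kap (sg X) j := fun hh => hne (kap_inj _ hh)
  omega

theorem sort_strict {n : ℕ} (X : Fin n → ℤ) : StrictMono (KK X ∘ Tuple.sort (KK X)) :=
  (Tuple.monotone_sort (KK X)).strictMono_of_injective
    ((KK_inj X).comp (Tuple.sort (KK X)).injective)

theorem sort_unique {n : ℕ} (X : Fin n → ℤ) (σ : Equiv.Perm (Fin n))
    (h : StrictMono (KK X ∘ σ)) : Tuple.sort (KK X) = σ := by
  have := Tuple.unique_monotone (Tuple.monotone_sort (KK X)) h.monotone
  ext i
  have := congrFun this i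
  rw [KK_inj X this]
/-- initial descent -/
def D0 {p : ℕ} (w : (Fin (p + 1) → Bool) × Equiv.Perm (Fin (p + 1))) : ℤ :=
  if w.1 (w.2 0) then 1 else 0

/-- inner descents -/
def D1 {p : ℕ} (w : (Fin (p + 1) → Bool) × Equiv.Perm (Fin (p + 1))) (i : Fin p) : ℤ :=
  if kap w.1 (w.2 i.succ) < kap w.1 (w.2 i.castSucc) then 1 else 0

/-- final descent -/
def D2 {p : ℕ} (w : (Fin (p + 1) → Bool) × Equiv.Perm (Fin (p + 1))) : ℤ :=
  if w.1 (w.2 (Fin.last p)) then 0 else 1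

theorem D0_nn {p : ℕ} (w : (Fin (p + 1) → Bool) × Equiv.Perm (Fin (p + 1))) : 0 ≤ D0 w := by
  unfold D0; split_ifs <;> norm_num

theorem D1_nn {p : ℕ} (w : (Fin (p + 1) → Bool) × Equiv.Perm (Fin (p + 1))) (i : Fin p) :
    0 ≤ D1 w i := by
  unfold D1; split_ifs <;> norm_num

theorem D2_nn {p : ℕ} (w : (Fin (p + 1) → Bool) × Equiv.Perm (Fin (p + 1))) : 0 ≤ D2 w := by
  unfold D2; split_ifs <;> norm_num

section
variable {p : ℕ} {ε : Fin (p + 1) → Bool} {σ : Equiv.Perm (Fin (p + 1))} {b q : ℤ}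
  {z : Fin (p + 1) → ℤ}

theorem Z_step (hb : 1 ≤ b) (h : Zp (D0 (ε, σ)) (D1 (ε, σ)) (D2 (ε, σ)) b q z) (i : Fin p) :
    z i.castSucc ≤ z i.succ ∧ (b ≤ z i.succ - z i.castSucc ∨
      kap ε (σ i.castSucc) < kap ε (σ i.succ)) := by
  have h1 := h.2.1 i
  unfold D1 at h1
  simp only at h1
  split_ifs at h1 with hk
  · constructor <;> omega
  · refine ⟨by omega, Or.inr (lt_of_le_of_ne (not_lt.1 hk) fun he => ?_)⟩
    have := σ.injective (kap_inj ε he)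
    exact absurd this (Fin.castSucc_lt_succ).ne

theorem Z_pair (hb : 1 ≤ b) (h : Zp (D0 (ε, σ)) (D1 (ε, σ)) (D2 (ε, σ)) b q z)
    (i j : Fin (p + 1)) (hij : i < j) :
    z i ≤ z j ∧ (b ≤ z j - z i ∨ kap ε (σ i) < kap ε (σ j)) := by
  induction j using Fin.induction with
  | zero => exact absurd hij (Fin.not_lt_zero i)
  | succ j ih =>
    have hs := Z_step hb h j
    rcases (Fin.le_castSucc_iff.2 hij).lt_or_eq with h1 | h1
    · have := ih h1
      omega
    · subst h1; exact hs

theorem Z_first (hb : 1 ≤ b) (h : Zp (D0 (ε, σ)) (D1 (ε, σ)) (D2 (ε, σ)) b q z)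
    (i : Fin (p + 1)) (hi : ε (σ i) = true) : b ≤ z i := by
  induction i using Fin.induction with
  | zero =>
    have := h.1
    simpa [D0, hi] using this
  | succ i ih =>
    have hs := Z_step hb h i
    have hr := Zp_range (D0_nn _) (D1_nn _) (D2_nn _) (by omega) h i.castSucc
    rcases hs.2 with h2 | h2
    · omega
    · have := ih (kap_pos_of_lt ε _ _ h2 hi)
      omega

theorem Z_final (hb : 1 ≤ b) (h : Zp (D0 (ε, σ)) (D1 (ε, σ)) (D2 (ε, σ)) b q z)
    (i : Fin (p + 1)) (hi : ε (σ i) = false) : b ≤ q - 2 * z i := by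
  induction i using Fin.reverseInduction with
  | last =>
    have := h.2.2
    simpa [D2, hi] using this
  | cast i ih =>
    have hs := Z_step hb h i
    have hr := Zp_range (D0_nn _) (D1_nn _) (D2_nn _) (by omega) h i.succ
    rcases hs.2 with h2 | h2
    · omega
    · have : ε (σ i.succ) = false := by
        by_contra hc
        have := kap_pos_of_lt ε _ _ h2 (by simpa using hc)
        simp [hi] at this
      have := ih this
      omega

end

theorem VF_card (p : ℕ) (b q : ℤ) (hb : 1 ≤ b) :
    (VF (p + 1) b q).card =
      ∑ w : (Fin (p + 1) → Bool) × Equiv.Perm (Fin (p + 1)),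
        (ZF (D0 w) (D1 w) (D2 w) b q).card := by
  rw [Finset.card_eq_sum_card_fiberwise (f := fun X => (sg X, Tuple.sort (KK X)))
    (t := Finset.univ) (by intro x _; simp)]
  refine Finset.sum_congr rfl ?_
  rintro ⟨ε, σ⟩ -
  refine Finset.card_nbij' (fun X i => |X (σ i)|)
    (fun z i => if ε i then z (σ.symm i) else - z (σ.symm i)) ?_ ?_ ?_ ?_
  · intro X hX
    simp only [Finset.coe_filter, Set.mem_ofPred_eq, mem_VF, Prod.mk.injEq] at hX
    obtain ⟨⟨hr, hA, hB, hC⟩, hs, hσ⟩ := hX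
    rw [Finset.mem_coe, mem_ZF (D0_nn _) (D1_nn _) (D2_nn _) (by omega)]
    have hm := sort_strict X
    rw [hσ] at hm
    subst hs
    refine ⟨?_, ?_, ?_⟩
    · simp only [D0]
      by_cases h : 0 < X (σ 0)
      · have := hA _ h
        simp [sg, h, abs_of_pos h, this]
      · simp [sg, h]
    · intro i
      simp only [D1]
      have h1 := hm (Fin.castSucc_lt_succ (i := i))
      simp only [Function.comp] at h1
      rw [KK_lt] at h1
      split_ifs with hk
      · have := hC _ _ hk
        omega
      · omega
    · simp only [D2]
      have h1 := hr (σ (Fin.last p))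
      by_cases h : 0 < X (σ (Fin.last p))
      · simp [sg, h, abs_of_pos h]
        omega
      · have := hB (σ (Fin.last p)) (by omega)
        simp only [sg, h, abs_of_nonpos (show X (σ (Fin.last p)) ≤ 0 by omega)]
        simp
        omega
  · intro z hz
    rw [Finset.mem_coe, mem_ZF (D0_nn _) (D1_nn _) (D2_nn _) (by omega)] at hz
    set X : Fin (p + 1) → ℤ := fun i => if ε i then z (σ.symm i) else - z (σ.symm i) with hX
    have hr : ∀ i, 0 ≤ z i ∧ 2 * z i ≤ q :=
      Zp_range (D0_nn _) (D1_nn _) (D2_nn _) (by omega) hz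
    have hF : ∀ i, ε i = true → b ≤ z (σ.symm i) := fun i hi =>
      Z_first hb hz (σ.symm i) (by simpa using hi)
    have hL : ∀ i, ε i = false → b ≤ q - 2 * z (σ.symm i) := fun i hi =>
      Z_final hb hz (σ.symm i) (by simpa using hi)
    have hXc : ∀ i, (ε i = true ∧ X i = z (σ.symm i)) ∨ (ε i = false ∧ X i = - z (σ.symm i)) := by
      intro i
      by_cases h : ε i = true
      · left; simp [hX, h]
      · right; simp [hX, h]
    have habs : ∀ i, |X i| = z (σ.symm i) := by
      intro i
      have := (hr (σ.symm i)).1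
      rcases hXc i with ⟨-, h⟩ | ⟨-, h⟩
      · rw [h, abs_of_nonneg this]
      · rw [h, abs_neg, abs_of_nonneg this]
    have hsg : sg X = ε := by
      funext i
      unfold sg
      have h1 := (hr (σ.symm i)).1
      rcases hXc i with ⟨h, h'⟩ | ⟨h, h'⟩
      · have := hF i h
        rw [h, h']
        simp; omega
      · rw [h, h']
        simp; omega
    simp only [Finset.coe_filter, Set.mem_ofPred_eq, mem_VF, Prod.mk.injEq]
    change VV b q X ∧ sg X = ε ∧ Tuple.sort (KK X) = σ
    refine ⟨⟨?_, ?_, ?_, ?_⟩, hsg, ?_⟩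
    · intro i
      have h1 := hr (σ.symm i)
      rcases hXc i with ⟨h, h'⟩ | ⟨h, h'⟩
      · have := hF i h
        omega
      · have := hL i h
        omega
    · intro i hi
      have h1 := hr (σ.symm i)
      rcases hXc i with ⟨h, h'⟩ | ⟨h, h'⟩
      · have := hF i h
        omega
      · omega
    · intro i hi
      have h1 := hr (σ.symm i)
      rcases hXc i with ⟨h, h'⟩ | ⟨h, h'⟩
      · have := hF i h
        omega
      · have := hL i h
        omega
    · intro i j hij
      rw [hsg] at hij
      rw [habs, habs]
      rcases lt_trichotomy (σ.symm i) (σ.symm j) with h | h | h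
      · exact Or.inl (Z_pair hb hz _ _ h).1
      · rw [h]; left; exact le_rfl
      · have := Z_pair hb hz _ _ h
        simp only [Equiv.apply_symm_apply] at this
        omega
    · apply sort_unique
      intro i j hij
      simp only [Function.comp]
      rw [KK_lt, hsg, habs, habs]
      simp only [Equiv.symm_apply_apply]
      have := Z_pair hb hz _ _ hij
      omega
  · intro X hX
    simp only [Finset.coe_filter, Set.mem_ofPred_eq, mem_VF, Prod.mk.injEq] at hX
    obtain ⟨-, hs, -⟩ := hX
    funext i
    subst hs
    simp only [Equiv.apply_symm_apply]
    by_cases h : 0 < X i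
    · simp [sg, h, abs_of_pos h]
    · simp [sg, h, abs_of_nonpos (show X i ≤ 0 by omega)]
  · intro z hz
    rw [Finset.mem_coe, mem_ZF (D0_nn _) (D1_nn _) (D2_nn _) (by omega)] at hz
    funext i
    have := (Zp_range (D0_nn _) (D1_nn _) (D2_nn _) (by omega) hz i).1
    simp only [Equiv.symm_apply_apply]
    split_ifs
    · exact abs_of_nonneg this
    · rw [abs_neg]; exact abs_of_nonneg this

theorem N_formula (p a q : ℕ) (hq : 4 * a + 2 * ((p + 1) * a) < q) :
    (N_BC (p + 1) q 1 a : ℚ) =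
      aeval shT (phi2 (a + 1) ^ (p + 1) * phi (a + 1)) (FF (p + 1) (a + 1)) q := by
  rw [N_eq_VF (by omega), count_poly]
  have h1 := VF_card p ((a + 1 : ℕ) : ℤ) q (by push_cast; omega)
  have h2 : (VF (p + 1) ((a : ℤ) + 1) q).card =
      ∑ ef ∈ (Fintype.piFinset fun _ : Fin (p + 1) => Finset.range (a + 1)) ×ˢ
        Finset.range (a + 1),
        if ((a + 1 : ℕ) : ℤ) ∣ (q : ℤ) - 2 * ((∑ i, ef.1 i : ℕ) : ℤ) - (ef.2 : ℤ) then
          (VF (p + 1) 1 (((q : ℤ) - 2 * ((∑ i, ef.1 i : ℕ) : ℤ) - (ef.2 : ℤ)) /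
            ((a + 1 : ℕ) : ℤ))).card else 0 := by
    push_cast at h1
    rw [h1]
    have h3 : ∀ w : (Fin (p + 1) → Bool) × Equiv.Perm (Fin (p + 1)), _ := fun w =>
      card_ZF (D0_nn w) (D1_nn w) (D2_nn w) (a + 1) (by omega) q
    push_cast at h3
    rw [Finset.sum_congr rfl fun w _ => h3 w, Finset.sum_comm]
    refine Finset.sum_congr rfl fun ef _ => ?_
    push_cast
    split_ifs with hd
    · rw [VF_card p 1 _ le_rfl]
    · simp
  rw [h2]
  push_cast
  refine Finset.sum_congr rfl ?_
  rintro ⟨e, f⟩ hef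
  simp only [Finset.mem_product, Fintype.mem_piFinset, Finset.mem_range] at hef
  obtain ⟨he, hf⟩ := hef
  have hs : ∑ i, e i ≤ (p + 1) * a := by
    have := Finset.sum_le_card_nsmul Finset.univ e a (fun i _ => by have := he i; omega)
    simpa using this
  unfold FF
  push_cast
  split_ifs with hd
  · obtain ⟨m, hm⟩ := hd
    have hs' : (∑ i, (e i : ℤ)) ≤ (p + 1) * a := by exact_mod_cast hs
    have hmp : 0 < m := by
      have : (0 : ℤ) < (a + 1) * m := by
        rw [← hm]
        have : (4 * a + 2 * ((p + 1) * a) : ℤ) < q := by exact_mod_cast hq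
        omega
      by_contra hc
      nlinarith
    rw [hm, Int.mul_ediv_cancel_left _ (by omega)]
    obtain ⟨k, rfl⟩ := Int.eq_ofNat_of_zero_le hmp.le
    rw [VF_one _ _ (by omega)]
    push_cast; rfl
  · rfl

/-- Corollary 4.8. Formula for the number of points avoiding the
extended Linial arrangement of type `BC_n` (hyperplanes `x_i, 2x_i, x_i ± x_j
= 1, ..., a`), for all large odd `q`. -/
theorem statement12 (n a : ℕ) (hn : 2 ≤ n) (ha : 1 ≤ a) :
    ∃ N : ℕ, ∀ q : ℕ, Odd q → N < q →
      (Odd a →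
        ((a : ℚ) + 1) ^ (n + 1) * (N_BC n q 1 (a : ℤ) : ℚ) =
          2 * polysum (X * (phi2 (a + 1)) ^ n * phi2 ((a + 1) / 2)) q n) ∧
      (Even a →
        ((a : ℚ) + 1) ^ (n + 1) * (N_BC n q 1 (a : ℤ) : ℚ) =
          polysum ((phi2 (a + 1)) ^ n * phi (a + 1)) q n) := by
  obtain ⟨p, rfl⟩ : ∃ p, n = p + 1 := ⟨n - 1, by omega⟩
  refine ⟨4 * a + 2 * ((p + 1) * a), fun q hq hN => ⟨fun hodd => ?_, fun heven => ?_⟩⟩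
  · rw [N_formula p a q hN]
    obtain ⟨c, rfl⟩ := hodd
    have h := odd_case (p + 1) (c + 1) q (by omega) hq
    have e1 : 2 * c + 1 + 1 = 2 * (c + 1) := by ring
    have e2 : (2 * c + 1 + 1) / 2 = c + 1 := by omega
    rw [e2, e1, ← h]
    push_cast
    congr 2
    ring
  · rw [N_formula p a q hN]
    have h := even_case (p + 1) (a + 1) q heven.add_one
    rw [← h]
    push_cast
    rfl
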